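/- arXiv:2002.00810 — 2 statements merged into one kernel-verified Lean document; each statement's English description precedes it below -/
import Mathlib

section
/- Let v : ℂP¹ → ℂP² be the map v(t₁ : t₂) = (i(t₁² + t₂²) : 2t₁t₂ : t₁² − t₂²) onto the conic Q = {z₁² + z₂² + z₃² = 0}. For distinct points p, q ∈ ℂP¹, choose representatives and let w = v(p) × v(q) ∈ ℂ³ be the cross product of representatives of v(p) and v(q). Then w ≠ 0 and w₁² + w₂² + w₃² ≠ 0, so [w] ∈ ℂP² ∖ Q and is independent of the chosen representatives; and the induced map u : (ℂP¹ × ℂP¹) ∖ Δ → ℂP² ∖ Q, u(p,q) = [v(p) × v(q)], is surjective with u(p,q) = u(p′,q′) if and only if (p′,q′) = (p,q) or (p′,q′) = (q,p) (so u is two-to-one). -/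
/-- The Veronese-type parametrization of the conic `Q = {z₁²+z₂²+z₃²=0} ⊂ ℂP²`. -/
def vrn (t : Fin 2 → ℂ) : Fin 3 → ℂ :=
  ![Complex.I * (t 0 ^ 2 + t 1 ^ 2), 2 * t 0 * t 1, t 0 ^ 2 - t 1 ^ 2]

/-- Projective proportionality of homogeneous coordinate vectors. -/
def PropTo {m : ℕ} (a b : Fin m → ℂ) : Prop := ∃ c : ℂ, c ≠ 0 ∧ b = c • a

/-!
The tangent line to `Q` at `v(t)` is `{z | v(t) ⬝ z = 0}`, so everything can be read off from three
identities in the bracket `[p, q] = p₀ q₁ - p₁ q₀`, which vanishes exactly when `p` and `q` agree in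
`ℂP¹`:

* `v(p) ⬝ v(q) = -2 [p, q]²`;
* `v(t) ⬝ (v(p) × v(q)) = -4i [t, p] [t, q] [p, q]`;
* the binary quadratic form `t ↦ v(t) ⬝ w` has discriminant `4 (w ⬝ w)`.

Put `w = v(p) × v(q)`. The first identity and Lagrange's identity give `w ⬝ w = -4 [p, q]⁴ ≠ 0`. By
the second, the only tangent lines through `[w]` are those at `v(p)` and `v(q)`, so `[w]` determines
the unordered pair `{p, q}`. By the third, if `w ⬝ w ≠ 0` then `w` lies on the tangent lines at two
distinct points, hence is proportional to their cross product.
-/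

open scoped Matrix

section bracket

variable {R : Type*} [CommRing R]

/-- The classical bracket `[p, q]` of two homogeneous coordinate vectors of points of a projective
line, i.e. the determinant of the matrix with rows `p` and `q`. It detects coincidence of the two
points. -/
def bracket (p q : Fin 2 → R) : R := p 0 * q 1 - p 1 * q 0

theorem bracket_eq_det (p q : Fin 2 → R) : bracket p q = Matrix.det (Matrix.of ![p, q]) := by
  simp only [bracket, Matrix.det_fin_two, Matrix.of_apply, Matrix.cons_val]

theorem bracket_self (p : Fin 2 → R) : bracket p p = 0 := by
  rw [bracket, mul_comm, sub_self]

theorem ne_zero_of_bracket_ne_zero {p q : Fin 2 → R} (h : bracket p q ≠ 0) : p ≠ 0 ∧ q ≠ 0 := by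
  constructor <;> rintro rfl <;> simp [bracket] at h

end bracket

namespace PropTo

variable {m : ℕ} {a b c : Fin m → ℂ}

theorem symm : PropTo a b → PropTo b a := by
  rintro ⟨k, hk, rfl⟩
  exact ⟨k⁻¹, inv_ne_zero hk, (inv_smul_smul₀ hk a).symm⟩

theorem trans : PropTo a b → PropTo b c → PropTo a c := by
  rintro ⟨k, hk, rfl⟩ ⟨l, hl, rfl⟩
  exact ⟨l * k, mul_ne_zero hl hk, smul_smul l k a⟩

theorem crossProduct {a a' b b' : Fin 3 → ℂ} :
    PropTo a a' → PropTo b b' → PropTo (a ⨯₃ b) (a' ⨯₃ b') := by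
  rintro ⟨k, hk, rfl⟩ ⟨l, hl, rfl⟩
  exact ⟨l * k, mul_ne_zero hl hk, by simp only [map_smul, LinearMap.smul_apply, smul_smul]⟩

theorem crossProduct_swap (a b : Fin 3 → ℂ) : PropTo (a ⨯₃ b) (b ⨯₃ a) :=
  ⟨-1, neg_ne_zero.mpr one_ne_zero, by rw [neg_one_smul, cross_anticomm]⟩

end PropTo

theorem propTo_iff_not_linearIndependent {m : ℕ} {a b : Fin m → ℂ} (ha : a ≠ 0) (hb : b ≠ 0) :
    PropTo a b ↔ ¬ LinearIndependent ℂ ![a, b] := by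
  rw [LinearIndependent.pair_iff' ha]
  push Not
  constructor
  · rintro ⟨k, -, rfl⟩
    exact ⟨k, rfl⟩
  · rintro ⟨k, rfl⟩
    exact ⟨k, left_ne_zero_of_smul hb, rfl⟩

theorem propTo_iff_bracket_eq_zero {p q : Fin 2 → ℂ} (hp : p ≠ 0) (hq : q ≠ 0) :
    PropTo p q ↔ bracket p q = 0 := by
  have linearIndependent_iff : LinearIndependent ℂ ![p, q] ↔ IsUnit (bracket p q) := by
    rw [bracket_eq_det, ← Matrix.isUnit_iff_isUnit_det]
    exact Matrix.linearIndependent_rows_iff_isUnit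
  rw [propTo_iff_not_linearIndependent hp hq, linearIndependent_iff, isUnit_iff_ne_zero, not_not]

theorem propTo_iff_crossProduct_eq_zero {a b : Fin 3 → ℂ} (ha : a ≠ 0) (hb : b ≠ 0) :
    PropTo a b ↔ a ⨯₃ b = 0 := by
  rw [propTo_iff_not_linearIndependent ha hb, ← crossProduct_ne_zero_iff_linearIndependent, not_not]

theorem crossProduct_propTo_of_dotProduct_eq_zero {a b w : Fin 3 → ℂ} (hab : a ⨯₃ b ≠ 0)
    (hw : w ≠ 0) (haw : a ⬝ᵥ w = 0) (hbw : b ⬝ᵥ w = 0) : PropTo (a ⨯₃ b) w := by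
  rw [propTo_iff_crossProduct_eq_zero hab hw, cross_cross_eq_smul_sub_smul, haw, hbw, zero_smul,
    zero_smul, sub_zero]

theorem dotProduct_self_fin_three {R : Type*} [Semiring R] (w : Fin 3 → R) :
    w ⬝ᵥ w = w 0 ^ 2 + w 1 ^ 2 + w 2 ^ 2 := by
  simp only [Matrix.vec3_dotProduct, sq]

theorem exists_bracket_ne_zero_and_binary_quadratic_eq_zero {K : Type*} [Field K] [NeZero (2 : K)]
    {a b c : K} (hsq : IsSquare (discrim a b c)) (hdisc : discrim a b c ≠ 0) :
    ∃ p q : Fin 2 → K, bracket p q ≠ 0 ∧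
      a * p 0 ^ 2 + b * p 0 * p 1 + c * p 1 ^ 2 = 0 ∧
      a * q 0 ^ 2 + b * q 0 * q 1 + c * q 1 ^ 2 = 0 := by
  by_cases ha : a = 0
  · have hb : b ≠ 0 := by
      rintro rfl
      simp [ha, discrim] at hdisc
    exact ⟨![1, 0], ![c, -b], by simpa [bracket] using hb, by simp [ha],
      by simp only [ha, Matrix.cons_val]; ring⟩
  · obtain ⟨s, hs⟩ := hsq
    have hs₀ : s ≠ 0 := by
      rintro rfl
      exact hdisc (by rw [hs, mul_zero])
    have hbracket : bracket ![-b + s, 2 * a] ![-b - s, 2 * a] = 2 * 2 * a * s := by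
      simp only [bracket, Matrix.cons_val]
      ring
    rw [discrim] at hs
    refine ⟨![-b + s, 2 * a], ![-b - s, 2 * a], ?_, ?_, ?_⟩
    · rw [hbracket]
      exact mul_ne_zero (mul_ne_zero (mul_ne_zero two_ne_zero two_ne_zero) ha) hs₀
    all_goals
      simp only [Matrix.cons_val]
      linear_combination -a * hs

theorem vrn_smul (c : ℂ) (p : Fin 2 → ℂ) : vrn (c • p) = c ^ 2 • vrn p := by
  ext i
  fin_cases i <;> simp [vrn] <;> ring

theorem PropTo.map_vrn {p q : Fin 2 → ℂ} : PropTo p q → PropTo (vrn p) (vrn q) := by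
  rintro ⟨c, hc, rfl⟩
  exact ⟨c ^ 2, pow_ne_zero 2 hc, vrn_smul c p⟩

theorem vrn_dotProduct_vrn (p q : Fin 2 → ℂ) :
    vrn p ⬝ᵥ vrn q = -2 * bracket p q ^ 2 := by
  simp only [vrn, bracket, Matrix.vec3_dotProduct, Matrix.cons_val]
  linear_combination (p 0 ^ 2 + p 1 ^ 2) * (q 0 ^ 2 + q 1 ^ 2) * Complex.I_sq

theorem vrn_dotProduct_self (p : Fin 2 → ℂ) : vrn p ⬝ᵥ vrn p = 0 := by
  rw [vrn_dotProduct_vrn, bracket_self, zero_pow two_ne_zero, mul_zero]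

theorem vrn_dotProduct_crossProduct_vrn (t p q : Fin 2 → ℂ) :
    vrn t ⬝ᵥ vrn p ⨯₃ vrn q =
      -4 * Complex.I * bracket t p * bracket t q * bracket p q := by
  simp only [vrn, bracket, cross_apply, Matrix.vec3_dotProduct, Matrix.cons_val]
  ring

theorem vrn_dotProduct (t : Fin 2 → ℂ) (w : Fin 3 → ℂ) :
    vrn t ⬝ᵥ w = (Complex.I * w 0 + w 2) * t 0 ^ 2 + 2 * w 1 * t 0 * t 1 +
      (Complex.I * w 0 - w 2) * t 1 ^ 2 := by
  simp only [vrn, Matrix.vec3_dotProduct, Matrix.cons_val]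
  ring

theorem discrim_vrn_dotProduct (w : Fin 3 → ℂ) :
    discrim (Complex.I * w 0 + w 2) (2 * w 1) (Complex.I * w 0 - w 2) = 4 * (w ⬝ᵥ w) := by
  rw [discrim, dotProduct_self_fin_three]
  linear_combination -4 * w 0 ^ 2 * Complex.I_sq

theorem crossProduct_vrn_dotProduct_self (p q : Fin 2 → ℂ) :
    vrn p ⨯₃ vrn q ⬝ᵥ vrn p ⨯₃ vrn q = -4 * bracket p q ^ 4 := by
  rw [cross_dot_cross, vrn_dotProduct_self p, zero_mul, dotProduct_comm (vrn q) (vrn p),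
    vrn_dotProduct_vrn p q]
  ring

theorem crossProduct_vrn_dotProduct_self_ne_zero {p q : Fin 2 → ℂ} (h : bracket p q ≠ 0) :
    vrn p ⨯₃ vrn q ⬝ᵥ vrn p ⨯₃ vrn q ≠ 0 := by
  rw [crossProduct_vrn_dotProduct_self]
  exact mul_ne_zero (by norm_num) (pow_ne_zero 4 h)

theorem crossProduct_vrn_ne_zero {p q : Fin 2 → ℂ} (h : bracket p q ≠ 0) :
    vrn p ⨯₃ vrn q ≠ 0 := fun h₀ ↦
  crossProduct_vrn_dotProduct_self_ne_zero h (by rw [h₀, dotProduct_zero])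

theorem exists_bracket_ne_zero_and_vrn_dotProduct_eq_zero {w : Fin 3 → ℂ} (hw : w ⬝ᵥ w ≠ 0) :
    ∃ p q : Fin 2 → ℂ, bracket p q ≠ 0 ∧ vrn p ⬝ᵥ w = 0 ∧ vrn q ⬝ᵥ w = 0 := by
  simp only [vrn_dotProduct]
  refine exists_bracket_ne_zero_and_binary_quadratic_eq_zero (IsAlgClosed.exists_eq_mul_self _) ?_
  rw [discrim_vrn_dotProduct]
  exact mul_ne_zero (by norm_num) hw

theorem exists_propTo_crossProduct_vrn {w : Fin 3 → ℂ} (hw : w ⬝ᵥ w ≠ 0) :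
    ∃ p q : Fin 2 → ℂ, bracket p q ≠ 0 ∧ PropTo w (vrn p ⨯₃ vrn q) := by
  obtain ⟨p, q, hpq, hpw, hqw⟩ := exists_bracket_ne_zero_and_vrn_dotProduct_eq_zero hw
  have hw₀ : w ≠ 0 := fun h ↦ hw (by rw [h, dotProduct_zero])
  exact ⟨p, q, hpq, (crossProduct_propTo_of_dotProduct_eq_zero (crossProduct_vrn_ne_zero hpq)
    hw₀ hpw hqw).symm⟩

theorem propTo_or_propTo_of_vrn_dotProduct_crossProduct_eq_zero {t p q : Fin 2 → ℂ} (ht : t ≠ 0)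
    (hp : p ≠ 0) (hq : q ≠ 0) (hpq : ¬ PropTo p q) (h : vrn t ⬝ᵥ vrn p ⨯₃ vrn q = 0) :
    PropTo t p ∨ PropTo t q := by
  rw [propTo_iff_bracket_eq_zero hp hq] at hpq
  rw [vrn_dotProduct_crossProduct_vrn] at h
  simpa [propTo_iff_bracket_eq_zero ht hp, propTo_iff_bracket_eq_zero ht hq, hpq] using h

section

variable {p q p' q' : Fin 2 → ℂ}

theorem PropTo.crossProduct_vrn
    (h : (PropTo p p' ∧ PropTo q q') ∨ (PropTo p q' ∧ PropTo q p')) :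
    PropTo (vrn p ⨯₃ vrn q) (vrn p' ⨯₃ vrn q') := by
  rcases h with ⟨hp, hq⟩ | ⟨hp, hq⟩
  · exact hp.map_vrn.crossProduct hq.map_vrn
  · exact (hp.map_vrn.crossProduct hq.map_vrn).trans (crossProduct_swap _ _)

theorem propTo_crossProduct_vrn_iff (hp : p ≠ 0) (hq : q ≠ 0) (hp' : p' ≠ 0) (hq' : q' ≠ 0)
    (hpq : ¬ PropTo p q) (hpq' : ¬ PropTo p' q') :
    PropTo (vrn p ⨯₃ vrn q) (vrn p' ⨯₃ vrn q') ↔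
      (PropTo p p' ∧ PropTo q q') ∨ (PropTo p q' ∧ PropTo q p') := by
  refine ⟨?_, PropTo.crossProduct_vrn⟩
  rintro ⟨e, -, he⟩
  have p_eq_or : PropTo p p' ∨ PropTo p q' :=
    propTo_or_propTo_of_vrn_dotProduct_crossProduct_eq_zero hp hp' hq' hpq'
      (by rw [he, dotProduct_smul, dot_self_cross, smul_zero])
  have q_eq_or : PropTo q p' ∨ PropTo q q' :=
    propTo_or_propTo_of_vrn_dotProduct_crossProduct_eq_zero hq hp' hq' hpq'
      (by rw [he, dotProduct_smul, dot_cross_self, smul_zero])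
  rcases p_eq_or with p_eq_p' | p_eq_q'
  · have q_ne_p' : ¬ PropTo q p' := fun h ↦ hpq (p_eq_p'.trans h.symm)
    exact Or.inl ⟨p_eq_p', q_eq_or.resolve_left q_ne_p'⟩
  · have q_ne_q' : ¬ PropTo q q' := fun h ↦ hpq (p_eq_q'.trans h.symm)
    exact Or.inr ⟨p_eq_q', q_eq_or.resolve_right q_ne_q'⟩

end

/-- for distinct `p, q ∈ ℂP¹`, the cross product `w = v(p) × v(q)` of
representatives is nonzero with `w₁²+w₂²+w₃² ≠ 0`, its projective class is independent
of the representatives, and the induced map `u(p,q) = [v(p) × v(q)]` from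
`(ℂP¹×ℂP¹)∖Δ` to `ℂP²∖Q` is surjective and exactly two-to-one:
`u(p,q) = u(p',q')` iff `(p',q') = (p,q)` or `(p',q') = (q,p)`. -/
theorem stmt9 :
    (∀ p q : Fin 2 → ℂ, p ≠ 0 → q ≠ 0 → ¬ PropTo p q →
      crossProduct (vrn p) (vrn q) ≠ 0 ∧
      (crossProduct (vrn p) (vrn q) 0) ^ 2 + (crossProduct (vrn p) (vrn q) 1) ^ 2 +
        (crossProduct (vrn p) (vrn q) 2) ^ 2 ≠ 0) ∧
    (∀ p q : Fin 2 → ℂ, p ≠ 0 → q ≠ 0 → ¬ PropTo p q →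
      ∀ c d : ℂ, c ≠ 0 → d ≠ 0 →
        ∃ e : ℂ, e ≠ 0 ∧
          crossProduct (vrn (c • p)) (vrn (d • q)) = e • crossProduct (vrn p) (vrn q)) ∧
    (∀ w : Fin 3 → ℂ, w ≠ 0 → (w 0) ^ 2 + (w 1) ^ 2 + (w 2) ^ 2 ≠ 0 →
      ∃ p q : Fin 2 → ℂ, p ≠ 0 ∧ q ≠ 0 ∧ ¬ PropTo p q ∧
        ∃ e : ℂ, e ≠ 0 ∧ crossProduct (vrn p) (vrn q) = e • w) ∧
    (∀ p q p' q' : Fin 2 → ℂ, p ≠ 0 → q ≠ 0 → p' ≠ 0 → q' ≠ 0 →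
      ¬ PropTo p q → ¬ PropTo p' q' →
      ((∃ e : ℂ, e ≠ 0 ∧
          crossProduct (vrn p') (vrn q') = e • crossProduct (vrn p) (vrn q)) ↔
        ((PropTo p p' ∧ PropTo q q') ∨ (PropTo p q' ∧ PropTo q p')))) := by
  simp only [← dotProduct_self_fin_three]
  refine ⟨fun p q hp hq hpq ↦ ?_, fun p q _ _ _ c d hc hd ↦ ?_, fun w _ hw ↦ ?_,
    fun p q p' q' hp hq hp' hq' hpq hpq' ↦ propTo_crossProduct_vrn_iff hp hq hp' hq' hpq hpq'⟩
  · rw [propTo_iff_bracket_eq_zero hp hq] at hpq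
    exact ⟨crossProduct_vrn_ne_zero hpq, crossProduct_vrn_dotProduct_self_ne_zero hpq⟩
  · exact PropTo.crossProduct_vrn (Or.inl ⟨⟨c, hc, rfl⟩, ⟨d, hd, rfl⟩⟩)
  · obtain ⟨p, q, hbracket, hpq⟩ := exists_propTo_crossProduct_vrn hw
    obtain ⟨hp, hq⟩ := ne_zero_of_bracket_ne_zero hbracket
    exact ⟨p, q, hp, hq, (propTo_iff_bracket_eq_zero hp hq).not.mpr hbracket, hpq⟩
end

section
/- Let V be a 2-dimensional complex vector space and g a nondegenerate symmetric ℂ-bilinear form on V. Then there exists a ℂ-linear endomorphism J of V with J ∘ J = −id_V and g(Jx, Jy) = g(x,y) for all x, y ∈ V, and the only ℂ-linear endomorphisms of V with these two properties are J and −J. Moreover the eigenspaces of J for the eigenvalues i and −i are exactly the two isotropic lines of g. -/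
/-!
An isotropic vector of a nondegenerate plane completes to a hyperbolic pair `e, f`, in which
`g x x = 2 g(x, e) g(x, f)`, so the isotropic lines are those of `e` and `f`. If `J` is an isometry
with `J² = -1`, then `g (J x) x = g (J² x) (J x) = -g (J x) x`, hence `J x ⊥ x`. For isotropic `x`
in a plane this makes `x` an eigenvector, so `J` is diagonal in the basis `e, f`, with entries
`t, t⁻¹` and `t² = -1`.
-/

open Module

section

variable {K V : Type*} [Field K] [AddCommGroup V] [Module K V]

theorem exists_ne_zero_apply_self_eq_zero [IsAlgClosed K] (hV : 1 < Module.rank K V)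
    (g : V →ₗ[K] V →ₗ[K] K) : ∃ e ≠ 0, g e e = 0 := by
  have : Nontrivial V := rank_pos_iff_nontrivial.mp (zero_lt_one.trans hV)
  obtain ⟨u, hu⟩ := exists_ne (0 : V)
  obtain ⟨v, huv⟩ := exists_linearIndependent_pair_of_one_lt_rank hV hu
  by_cases hguu : g u u = 0
  · exact ⟨u, hu, hguu⟩
  obtain ⟨t, ht⟩ := IsAlgClosed.exists_root
    (.C (g u u) * .X ^ 2 + .C (g u v + g v u) * .X + .C (g v v))
    (by rw [Polynomial.degree_quadratic hguu]; exact two_ne_zero)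
  refine ⟨t • u + v, fun h => ?_, ?_⟩
  · exact one_ne_zero (LinearIndependent.pair_iff.mp huv t 1 (by rwa [one_smul])).2
  · simp only [Polynomial.IsRoot.def, Polynomial.eval_add, Polynomial.eval_mul,
      Polynomial.eval_C, Polynomial.eval_pow, Polynomial.eval_X] at ht
    simp only [map_add, map_smul, LinearMap.add_apply, LinearMap.smul_apply, smul_eq_mul]
    linear_combination ht

/-- Isotropic vectors `e`, `f` with `g e f = g f e = 1`: the standard basis of a hyperbolic plane.
Both products are recorded because `g` itself is not assumed symmetric. -/
structure IsHyperbolicPair (g : V →ₗ[K] V →ₗ[K] K) (e f : V) : Prop where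
  left_left : g e e = 0
  right_right : g f f = 0
  left_right : g e f = 1
  right_left : g f e = 1

/-- The linear map scaling `e` by `t` and `f` by `t⁻¹` when `e`, `f` is a hyperbolic pair spanning
`V`; the coordinates of `x` in that basis are `g x f` and `g x e`. For `t² = -1` these are the
endomorphisms `J` of the theorem. -/
def hyperbolicRotation (g : V →ₗ[K] V →ₗ[K] K) (e f : V) (t : K) : V →ₗ[K] V :=
  t • (g.flip f).smulRight e + t⁻¹ • (g.flip e).smulRight f

/-- Compatibility of `J` with the form `g`: `J` is an isometry of `g` squaring to `-1`. -/
def IsCompatibleComplexStructure (g : V →ₗ[K] V →ₗ[K] K) (J : V →ₗ[K] V) : Prop :=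
  J ∘ₗ J = -LinearMap.id ∧ ∀ x y, g (J x) (J y) = g x y

variable {g : V →ₗ[K] V →ₗ[K] K} {e f : V} {t : K} {J : V →ₗ[K] V}

theorem hyperbolicRotation_apply (x : V) :
    hyperbolicRotation g e f t x = (t * g x f) • e + (t⁻¹ * g x e) • f := by
  simp [hyperbolicRotation, smul_smul]

theorem hyperbolicRotation_neg : hyperbolicRotation g e f (-t) = -hyperbolicRotation g e f t := by
  simp only [hyperbolicRotation, inv_neg, neg_smul, neg_add]

theorem hyperbolicRotation_swap : hyperbolicRotation g f e t⁻¹ = hyperbolicRotation g e f t := by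
  rw [hyperbolicRotation, hyperbolicRotation, inv_inv, add_comm]

theorem exists_isHyperbolicPair [NeZero (2 : K)] (hg : g.IsSymm) (he : g e e = 0)
    (hge : g e ≠ 0) : ∃ f, IsHyperbolicPair g e f := by
  obtain ⟨z, hz⟩ : ∃ z, g e z = 1 := LinearMap.surjective hge 1
  have hze : g z e = 1 := hg.eq e z ▸ hz
  refine ⟨z - (g z z / 2) • e, he, ?_, ?_, ?_⟩
  · simp only [map_sub, map_smul, LinearMap.sub_apply, LinearMap.smul_apply, smul_eq_mul,
      he, hz, hze]
    linear_combination -add_halves (g z z)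
  · simp [he, hz]
  · simp [he, hze]

namespace IsCompatibleComplexStructure

theorem apply_apply (hJ : IsCompatibleComplexStructure g J) (x : V) : J (J x) = -x :=
  LinearMap.congr_fun hJ.1 x

theorem form_apply_self [NeZero (2 : K)] (hJ : IsCompatibleComplexStructure g J) (hg : g.IsSymm)
    (x : V) : g (J x) x = 0 := by
  have hskew : g (J x) x = -g (J x) x :=
    calc g (J x) x = g (J (J x)) (J x) := (hJ.2 _ _).symm
      _ = -g x (J x) := by rw [hJ.apply_apply, map_neg, LinearMap.neg_apply]
      _ = -g (J x) x := by rw [← hg.eq x (J x), RingHom.id_apply]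
  have : 2 * g (J x) x = 0 := by linear_combination hskew
  exact (mul_eq_zero.mp this).resolve_left two_ne_zero

end IsCompatibleComplexStructure

namespace IsHyperbolicPair

theorem symm (h : IsHyperbolicPair g e f) : IsHyperbolicPair g f e :=
  ⟨h.right_right, h.left_left, h.right_left, h.left_right⟩

theorem left_ne_zero (h : IsHyperbolicPair g e f) : e ≠ 0 := by
  rintro rfl
  simpa using h.left_right

theorem linearIndependent (h : IsHyperbolicPair g e f) : LinearIndependent K ![e, f] := by
  refine LinearIndependent.pair_iff.mpr fun a b hab => ⟨?_, ?_⟩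
  · simpa [h.right_right, h.right_left] using congrArg (g f) hab
  · simpa [h.left_left, h.left_right] using congrArg (g e) hab

theorem eq_smul_add_smul (h : IsHyperbolicPair g e f) (hV : finrank K V = 2) (x : V) :
    x = g x f • e + g x e • f := by
  have hx : x ∈ Submodule.span K (Set.range ![e, f]) := by
    rw [h.linearIndependent.span_eq_top_of_card_eq_finrank (by simp [hV])]
    trivial
  rw [Matrix.range_cons_cons_empty, Submodule.mem_span_pair] at hx
  obtain ⟨a, b, rfl⟩ := hx
  simp [h.left_left, h.right_right, h.left_right, h.right_left]

theorem apply_eq (h : IsHyperbolicPair g e f) (hV : finrank K V = 2) (x y : V) :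
    g x y = g x f * g y e + g x e * g y f := by
  conv_lhs => rw [h.eq_smul_add_smul hV y]
  simp only [map_add, map_smul, smul_eq_mul]
  ring

theorem isSymm (h : IsHyperbolicPair g e f) (hV : finrank K V = 2) : g.IsSymm :=
  ⟨fun x y => by rw [RingHom.id_apply, h.apply_eq hV x y, h.apply_eq hV y x]; ring⟩

theorem linearMap_ext (h : IsHyperbolicPair g e f) (hV : finrank K V = 2) {A B : V →ₗ[K] V}
    (he : A e = B e) (hf : A f = B f) : A = B := by
  ext x
  rw [h.eq_smul_add_smul hV x]
  simp only [map_add, map_smul, he, hf]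

theorem mem_span_left_iff (h : IsHyperbolicPair g e f) (hV : finrank K V = 2) {x : V} :
    x ∈ Submodule.span K {e} ↔ g x e = 0 := by
  refine Submodule.mem_span_singleton.trans ⟨?_, fun hx => ⟨g x f, ?_⟩⟩
  · rintro ⟨a, rfl⟩
    simp [h.left_left]
  · simpa [hx] using (h.eq_smul_add_smul hV x).symm

theorem apply_self_eq_zero_iff [NeZero (2 : K)] (h : IsHyperbolicPair g e f)
    (hV : finrank K V = 2) {x : V} :
    g x x = 0 ↔ x ∈ Submodule.span K {e} ∨ x ∈ Submodule.span K {f} := by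
  have hx : g x x = 2 * (g x e * g x f) := by
    rw [h.apply_eq hV]
    ring
  rw [hx, h.mem_span_left_iff hV, h.symm.mem_span_left_iff hV, mul_eq_zero, mul_eq_zero,
    or_iff_right two_ne_zero]

theorem hyperbolicRotation_left (h : IsHyperbolicPair g e f) :
    hyperbolicRotation g e f t e = t • e := by
  simp [hyperbolicRotation_apply, h.left_left, h.left_right]

theorem hyperbolicRotation_right (h : IsHyperbolicPair g e f) :
    hyperbolicRotation g e f t f = t⁻¹ • f := by
  simp [hyperbolicRotation_apply, h.right_right, h.right_left]

theorem form_hyperbolicRotation (h : IsHyperbolicPair g e f) (hV : finrank K V = 2) (ht : t ≠ 0)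
    (x y : V) :
    g (hyperbolicRotation g e f t x) (hyperbolicRotation g e f t y) = g x y := by
  rw [h.apply_eq hV x y]
  simp only [hyperbolicRotation_apply, map_add, map_smul, LinearMap.add_apply,
    LinearMap.smul_apply, smul_eq_mul, h.left_left, h.right_right, h.left_right, h.right_left]
  field_simp
  ring

theorem eigenspace_hyperbolicRotation (h : IsHyperbolicPair g e f) (hV : finrank K V = 2)
    (ht : t ≠ t⁻¹) :
    End.eigenspace (hyperbolicRotation g e f t) t = Submodule.span K {e} := by
  ext x
  rw [End.mem_eigenspace_iff, h.mem_span_left_iff hV]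
  constructor
  · intro hx
    have hxe : t⁻¹ * g x e = t * g x e := by
      simpa [hyperbolicRotation_apply, h.left_left, h.right_left]
        using congrArg (fun v => g v e) hx
    by_contra hne
    exact ht (mul_right_cancel₀ hne hxe).symm
  · intro hx
    conv_rhs => rw [h.eq_smul_add_smul hV x]
    simp [hyperbolicRotation_apply, hx, smul_smul]

theorem isCompatibleComplexStructure_hyperbolicRotation (h : IsHyperbolicPair g e f)
    (hV : finrank K V = 2) (ht : t * t = -1) :
    IsCompatibleComplexStructure g (hyperbolicRotation g e f t) := by
  have ht0 : t ≠ 0 := by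
    rintro rfl
    simp at ht
  refine ⟨h.linearMap_ext hV ?_ ?_, h.form_hyperbolicRotation hV ht0⟩
  · simp [h.hyperbolicRotation_left, smul_smul, ht]
  · simp [h.hyperbolicRotation_right, smul_smul, ← mul_inv, ht]

theorem exists_eq_hyperbolicRotation [NeZero (2 : K)] (h : IsHyperbolicPair g e f)
    (hV : finrank K V = 2) (hJ : IsCompatibleComplexStructure g J) :
    ∃ t, t * t = -1 ∧ J = hyperbolicRotation g e f t := by
  have hperp := hJ.form_apply_self (h.isSymm hV)
  obtain ⟨t, ht⟩ :=
    Submodule.mem_span_singleton.mp ((h.mem_span_left_iff hV).mpr (hperp e))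
  obtain ⟨s, hs⟩ :=
    Submodule.mem_span_singleton.mp ((h.symm.mem_span_left_iff hV).mpr (hperp f))
  have htt : t * t = -1 := by
    refine smul_left_injective K h.left_ne_zero ?_
    simpa [← ht, smul_smul] using hJ.apply_apply e
  have hst : s * t = 1 := by
    simpa [← ht, ← hs, h.left_right] using hJ.2 e f
  refine ⟨t, htt, h.linearMap_ext hV ?_ ?_⟩
  · rw [h.hyperbolicRotation_left, ht]
  · rw [h.hyperbolicRotation_right, ← eq_inv_of_mul_eq_one_left hst, hs]

theorem eq_or_eq_neg_hyperbolicRotation [NeZero (2 : K)] (h : IsHyperbolicPair g e f)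
    (hV : finrank K V = 2) (ht : t * t = -1) (hJ : IsCompatibleComplexStructure g J) :
    J = hyperbolicRotation g e f t ∨ J = -hyperbolicRotation g e f t := by
  obtain ⟨s, hs, rfl⟩ := h.exists_eq_hyperbolicRotation hV hJ
  rw [← hyperbolicRotation_neg]
  exact (mul_self_eq_mul_self_iff.mp (hs.trans ht.symm)).imp (congrArg _) (congrArg _)

end IsHyperbolicPair

theorem stmt16_general [NeZero (2 : K)] {i : K} (hi : i * i = -1) (hV : finrank K V = 2)
    (hg : g.IsSymm) (hnd : g.SeparatingLeft) (hiso : ∃ e ≠ 0, g e e = 0) :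
    ∃ J : V →ₗ[K] V,
      IsCompatibleComplexStructure g J ∧
      (∀ J', IsCompatibleComplexStructure g J' → J' = J ∨ J' = -J) ∧
      finrank K (End.eigenspace J i) = 1 ∧
      finrank K (End.eigenspace J (-i)) = 1 ∧
      {x : V | g x x = 0} = (End.eigenspace J i : Set V) ∪ (End.eigenspace J (-i) : Set V) := by
  obtain ⟨e, he0, he⟩ := hiso
  obtain ⟨f, h⟩ := exists_isHyperbolicPair hg he
    fun hge => he0 (hnd e (LinearMap.congr_fun hge))
  have hinv : i⁻¹ = -i := inv_eq_of_mul_eq_one_right (by rw [mul_neg, hi, neg_neg])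
  have hi0 : i ≠ 0 := by
    rintro rfl
    simp at hi
  have hne : i ≠ i⁻¹ := hinv ▸ fun hii =>
    mul_ne_zero two_ne_zero hi0 (by linear_combination hii)
  have heig : End.eigenspace (hyperbolicRotation g e f i) i = Submodule.span K {e} :=
    h.eigenspace_hyperbolicRotation hV hne
  have heig_neg : End.eigenspace (hyperbolicRotation g e f i) (-i) = Submodule.span K {f} := by
    rw [← hinv, ← hyperbolicRotation_swap]
    exact h.symm.eigenspace_hyperbolicRotation hV (by rwa [inv_inv, ne_comm])
  refine ⟨hyperbolicRotation g e f i, h.isCompatibleComplexStructure_hyperbolicRotation hV hi,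
    fun J' hJ' => h.eq_or_eq_neg_hyperbolicRotation hV hi hJ', ?_, ?_, ?_⟩
  · rw [heig, finrank_span_singleton h.left_ne_zero]
  · rw [heig_neg, finrank_span_singleton h.symm.left_ne_zero]
  · rw [heig, heig_neg]
    exact Set.ext fun x => h.apply_self_eq_zero_iff hV

end

/-- a nondegenerate symmetric ℂ-bilinear form on a 2-dimensional complex
vector space admits exactly two compatible "complex rotations" `±J` with `J² = -id`
and `g(Jx,Jy) = g(x,y)`, whose `±i`-eigenspaces are exactly the two isotropic lines. -/
theorem stmt16 {V : Type*} [AddCommGroup V] [Module ℂ V] [FiniteDimensional ℂ V]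
    (hdim : Module.finrank ℂ V = 2)
    (g : V →ₗ[ℂ] V →ₗ[ℂ] ℂ) (hsymm : ∀ x y, g x y = g y x)
    (hnd : ∀ x, (∀ y, g x y = 0) → x = 0) :
    ∃ J : V →ₗ[ℂ] V,
      (J ∘ₗ J = -LinearMap.id ∧ ∀ x y, g (J x) (J y) = g x y) ∧
      (∀ J' : V →ₗ[ℂ] V,
        (J' ∘ₗ J' = -LinearMap.id ∧ ∀ x y, g (J' x) (J' y) = g x y) →
        J' = J ∨ J' = -J) ∧
      Module.finrank ℂ (Module.End.eigenspace (J : Module.End ℂ V) Complex.I) = 1 ∧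
      Module.finrank ℂ (Module.End.eigenspace (J : Module.End ℂ V) (-Complex.I)) = 1 ∧
      {x : V | g x x = 0} =
        (Module.End.eigenspace (J : Module.End ℂ V) Complex.I : Set V) ∪
        (Module.End.eigenspace (J : Module.End ℂ V) (-Complex.I) : Set V) :=
  stmt16_general Complex.I_mul_I hdim ⟨hsymm⟩ hnd
    (exists_ne_zero_apply_self_eq_zero (one_lt_rank_of_one_lt_finrank (hdim ▸ one_lt_two)) g)
end
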